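/- arXiv:2405.20197 — 3 statements merged into one kernel-verified Lean document; each statement's English description precedes it below -/
import Mathlib

section
/- Let n ≥ 1, let p, q ∈ M_n with p ≠ 1 and q ≠ 1, and let x = x_1⋯x_k and y = y_1⋯y_l be nonempty words over X_n whose final letters satisfy x_k ≠ y_l. Set v := p·x = q·y (equal in M_n), and suppose that (⋆) for every u ∈ pM_n ∩ qM_n and every letter z ∈ X_n, u·z ≠ v, and that q ∉ pM_n (no path from p to q in the Cayley graph). Then: (1) v is an intersection base; (2) x_k ∈ Q_n and y_l ∈ Q_n; (3) k = 1, i.e. x consists of the single letter x_k. -/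
namespace Malcev

/-- The alphabet `X_n`: letters `a, b, c, d` together with `A_i, B_i, C_i, D_i`
for `i` ranging over `Fin n` (so `A ⟨0, _⟩` represents `A_1`, etc.). -/
inductive Letter (n : ℕ) : Type
  | a | b | c | d
  | A (i : Fin n) | B (i : Fin n) | C (i : Fin n) | D (i : Fin n)
  deriving DecidableEq

open FreeMonoid

/-- The defining relations `ρ_n`. -/
inductive rel (n : ℕ) : FreeMonoid (Letter n) → FreeMonoid (Letter n) → Prop
  | da (h : 0 < n) :
      rel n (of .d * of .a) (of (.A ⟨0, h⟩) * of (.C ⟨0, h⟩))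
  | AD (i : ℕ) (h : i + 1 < n) :
      rel n (of (.A ⟨i, Nat.lt_of_succ_lt h⟩) * of (.D ⟨i, Nat.lt_of_succ_lt h⟩))
            (of (.A ⟨i + 1, h⟩) * of (.C ⟨i + 1, h⟩))
  | An (h : 0 < n) :
      rel n (of (.A ⟨n - 1, Nat.sub_lt h Nat.one_pos⟩) * of (.D ⟨n - 1, Nat.sub_lt h Nat.one_pos⟩))
            (of .d * of .b)
  | cb (h : 0 < n) :
      rel n (of .c * of .b)
            (of (.B ⟨n - 1, Nat.sub_lt h Nat.one_pos⟩) * of (.D ⟨n - 1, Nat.sub_lt h Nat.one_pos⟩))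
  | BC (i : ℕ) (h : i + 1 < n) :
      rel n (of (.B ⟨i + 1, h⟩) * of (.C ⟨i + 1, h⟩))
            (of (.B ⟨i, Nat.lt_of_succ_lt h⟩) * of (.D ⟨i, Nat.lt_of_succ_lt h⟩))

/-- The congruence on the free monoid generated by `ρ_n`. -/
def Mcon (n : ℕ) : Con (FreeMonoid (Letter n)) := conGen (rel n)

/-- The presented monoid `M_n = Mon⟨X_n | ρ_n⟩`. -/
abbrev Mn (n : ℕ) : Type := (Mcon n).Quotient

/-- The quotient (natural) map `X_n* → M_n`. -/
def mk (n : ℕ) : FreeMonoid (Letter n) →* Mn n := (Mcon n).mk'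

/-- The image in `M_n` of a single letter. -/
def gen {n : ℕ} (x : Letter n) : Mn n := mk n (of x)

/-- The image in `M_n` of a word (given as a list of letters). -/
def word {n : ℕ} (w : List (Letter n)) : Mn n := mk n (ofList w)

/-- The set `P_n = {c, d, A_1, …, A_n, B_1, …, B_n}`. -/
def inP {n : ℕ} : Letter n → Prop
  | .c => True | .d => True | .A _ => True | .B _ => True | _ => False

/-- The set `Q_n = {a, b, C_1, …, C_n, D_1, …, D_n}`. -/
def inQ {n : ℕ} : Letter n → Prop
  | .a => True | .b => True | .C _ => True | .D _ => True | _ => False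

/-- `inR x y` means the two-letter word `xy` belongs to
`R_n = {db, A_1C_1, …, A_nC_n, B_1D_1, …, B_nD_n}`. -/
def inR {n : ℕ} : Letter n → Letter n → Prop
  | .d, .b => True
  | .A i, .C j => i = j
  | .B i, .D j => i = j
  | _, _ => False

/-- `inL x y` means the two-letter word `xy` belongs to
`L_n = {cb, da, A_1D_1, …, A_nD_n, B_2C_2, …, B_nC_n}`. -/
def inL {n : ℕ} : Letter n → Letter n → Prop
  | .c, .b => True
  | .d, .a => True
  | .A i, .D j => i = j
  | .B i, .C j => i = j ∧ 1 ≤ i.val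
  | _, _ => False

/-- A word is in left normal form if no two consecutive letters form a word in `R_n`. -/
def LeftNormal {n : ℕ} (w : List (Letter n)) : Prop :=
  List.Chain' (fun x y => ¬ inR x y) w

/-- `v ∈ M_n` is an intersection base if some word `a_1 ⋯ a_m` (`m ≥ 2`) in left
normal form equals `v` in `M_n` and its final two letters form a word in `L_n`. -/
def IsIntersectionBase {n : ℕ} (v : Mn n) : Prop :=
  ∃ (w : List (Letter n)) (x y : Letter n),
    LeftNormal (w ++ [x, y]) ∧ word (w ++ [x, y]) = v ∧ inL x y

/-- The principal right ideal `pM_n`. -/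
def rIdeal {n : ℕ} (p : Mn n) : Set (Mn n) := {x | ∃ m, x = p * m}


/-- The word in `L_n` equal in `M_n` to a given two-letter word in `R_n`. -/
def toL {n : ℕ} : Letter n → Letter n → Option (Letter n × Letter n)
  | .d, .b => if h : 0 < n then
      some (.A ⟨n - 1, Nat.sub_lt h Nat.one_pos⟩, .D ⟨n - 1, Nat.sub_lt h Nat.one_pos⟩) else none
  | .A i, .C j => if i = j then
      (if i.val = 0 then some (.d, .a)
        else some (.A ⟨i.val - 1, by omega⟩, .D ⟨i.val - 1, by omega⟩)) else none
  | .B i, .D j => if i = j then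
      (if h : i.val + 1 < n then some (.B ⟨i.val + 1, h⟩, .C ⟨i.val + 1, h⟩)
        else some (.c, .b)) else none
  | _, _ => none

/-- Right multiplication by a letter on left normal forms, stored as reversed lists. -/
def push {n : ℕ} : List (Letter n) → Letter n → List (Letter n)
  | [], z => [z]
  | h :: t, z => match toL h z with
    | some (l, m) => m :: l :: t
    | none => z :: h :: t

lemma push_cases {n : ℕ} (s : List (Letter n)) (z : Letter n) :
    (push s z = z :: s ∧ ∀ h t, s = h :: t → toL h z = none) ∨
      ∃ h t l m, s = h :: t ∧ toL h z = some (l, m) ∧ push s z = m :: l :: t := by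
  cases s with
  | nil => left; simp [push]
  | cons h t =>
    rcases hz : toL h z with _ | ⟨l, m⟩
    · left; simp [push, hz]
    · right; exact ⟨h, t, l, m, rfl, hz, by simp [push, hz]⟩

lemma toL_eq_none_of_inP {n : ℕ} {h z : Letter n} (hz : inP z) : toL h z = none := by
  cases h <;> cases z <;> simp_all [toL, inP]

lemma push_of_inP {n : ℕ} (s : List (Letter n)) {z : Letter n} (hz : inP z) :
    push s z = z :: s := by
  cases s <;> simp [push, toL_eq_none_of_inP hz]

lemma toL_spec {n : ℕ} {h z l m : Letter n} (e : toL h z = some (l, m)) :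
    inP h ∧ inQ z ∧ inP l ∧ inQ m ∧ inL l m := by
  cases h <;> cases z <;> simp only [toL] at e <;> (try split_ifs at e) <;> (try cases e) <;>
    simp [inP, inQ, inL]

lemma gen_mul_gen_of_toL {n : ℕ} {h z l m : Letter n} (e : toL h z = some (l, m)) :
    gen h * gen z = gen l * gen m := by
  have key : ∀ {u v}, rel n u v → mk n u = mk n v := fun r =>
    (Con.eq _).2 (ConGen.Rel.of _ _ r)
  simp only [gen, ← map_mul]
  cases h <;> cases z <;> simp only [toL] at e <;> (try split_ifs at e) <;> (try cases e)
  · rename_i h0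
    exact (key (rel.An h0)).symm
  · rename_i i j hij hi
    subst hij
    obtain ⟨i, hlt⟩ := i
    obtain rfl : i = 0 := hi
    exact (key (rel.da hlt)).symm
  · rename_i i j hij hi
    subst hij
    obtain ⟨_ | i, hlt⟩ := i
    · exact absurd rfl hi
    · exact (key (rel.AD i hlt)).symm
  · rename_i i j hij hi
    subst hij
    exact (key (rel.BC i.val hi)).symm
  · rename_i i j hij hi
    subst hij
    have h0 : 0 < n := i.pos
    obtain rfl : i = ⟨n - 1, Nat.sub_lt h0 Nat.one_pos⟩ := by
      apply Fin.ext
      have := i.isLt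
      simp only
      omega
    exact (key (rel.cb h0)).symm

lemma eq_of_toL_eq_some {n : ℕ} {h z h' z' : Letter n} {r : Letter n × Letter n}
    (e : toL h z = some r) (e' : toL h' z' = some r) : z = z' := by
  cases h <;> cases z <;> simp only [toL] at e <;> (try split_ifs at e) <;> (try cases e) <;>
  cases h' <;> cases z' <;> simp only [toL] at e' <;> (try split_ifs at e') <;>
    simp_all [Fin.ext_iff] <;> omega

lemma not_inR_of_toL_eq_none {n : ℕ} (hn : 1 ≤ n) {h z : Letter n} (e : toL h z = none) :
    ¬ inR h z := by
  cases h <;> cases z <;> simp only [toL] at e <;> (try split_ifs at e) <;> simp_all [inR]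

lemma not_inR_of_inP {n : ℕ} {h z : Letter n} (hz : inP z) : ¬ inR h z := by
  cases h <;> cases z <;> simp_all [inR, inP]

lemma not_inR_of_inL {n : ℕ} {h z : Letter n} (e : inL h z) : ¬ inR h z := by
  cases h <;> cases z <;> simp_all [inR, inL]

lemma not_inP_of_inQ {n : ℕ} {z : Letter n} (hz : inQ z) : ¬ inP z := by
  cases z <;> simp_all [inP, inQ]

/-- Two words are related when they act in the same way on left normal forms. -/
def pushCon (n : ℕ) : Con (FreeMonoid (Letter n)) where
  r u v := ∀ s, u.toList.foldl push s = v.toList.foldl push s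
  iseqv := ⟨fun _ _ => rfl, fun h s => (h s).symm, fun h h' s => (h s).trans (h' s)⟩
  mul' h h' s := by simp [h s, h' _]

lemma Mcon_le_pushCon (n : ℕ) : Mcon n ≤ pushCon n := by
  refine Con.conGen_le.2 ?_
  intro u v r s
  cases r <;> simp only [toList_mul, toList_of, List.cons_append, List.nil_append,
    List.foldl_cons, List.foldl_nil] <;>
    rw [push_of_inP s (by trivial), push_of_inP s (by trivial)] <;> simp [push, toL]
  case An h => simp [h]
  case cb h => simp [show ¬ n - 1 + 1 < n by omega]
  case BC h => simp [h]

/-- The reversed left normal form of an element of `M_n`. -/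
def nf {n : ℕ} (p : Mn n) : List (Letter n) :=
  Con.liftOn p (fun u => u.toList.foldl push []) fun _ _ h => Mcon_le_pushCon n h []

lemma nf_mul_gen {n : ℕ} (p : Mn n) (z : Letter n) : nf (p * gen z) = push (nf p) z := by
  induction p using Con.induction_on with
  | H u =>
    change (u * of z).toList.foldl push [] = push (u.toList.foldl push []) z
    simp

lemma word_append {n : ℕ} (u v : List (Letter n)) : word (u ++ v) = word u * word v := by
  simp [word, ofList_append]

lemma word_singleton {n : ℕ} (z : Letter n) : word [z] = gen z := rfl

lemma exists_word {n : ℕ} (p : Mn n) : ∃ u, p = word u := by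
  induction p using Con.induction_on with
  | H u => exact ⟨u.toList, rfl⟩

lemma word_reverse_push {n : ℕ} (s : List (Letter n)) (z : Letter n) :
    word (push s z).reverse = word s.reverse * gen z := by
  rcases push_cases s z with ⟨e, -⟩ | ⟨h, t, l, m, rfl, e, e'⟩
  · simp [e, word_append, word_singleton]
  · simp only [e', List.reverse_cons, word_append, word_singleton, mul_assoc,
      gen_mul_gen_of_toL e]

lemma word_reverse_nf {n : ℕ} (p : Mn n) : word (nf p).reverse = p := by
  obtain ⟨u, rfl⟩ := exists_word p
  induction u using List.reverseRecOn with
  | nil => rfl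
  | append_singleton u z ih =>
    rw [word_append, word_singleton, nf_mul_gen, word_reverse_push, ih]

lemma isChain_push {n : ℕ} (hn : 1 ≤ n) {s : List (Letter n)} {z : Letter n}
    (hs : s.IsChain fun x y => ¬ inR y x) : (push s z).IsChain fun x y => ¬ inR y x := by
  rcases push_cases s z with ⟨e, e'⟩ | ⟨h, t, l, m, rfl, e, e'⟩
  · rw [e]
    cases s with
    | nil => simp
    | cons h t => exact hs.cons_cons (not_inR_of_toL_eq_none hn (e' h t rfl))
  · rw [e']
    obtain ⟨-, -, hl, -, hlm⟩ := toL_spec e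
    refine List.IsChain.cons_cons (not_inR_of_inL hlm) ?_
    cases t with
    | nil => simp
    | cons g t => exact hs.tail.cons_cons (not_inR_of_inP hl)

lemma isChain_nf {n : ℕ} (hn : 1 ≤ n) (p : Mn n) :
    (nf p).IsChain fun x y => ¬ inR y x := by
  obtain ⟨u, rfl⟩ := exists_word p
  induction u using List.reverseRecOn with
  | nil => exact List.isChain_nil
  | append_singleton u z ih =>
    rw [word_append, word_singleton, nf_mul_gen]
    exact isChain_push hn ih

lemma exists_of_push_eq_push {n : ℕ} {s t : List (Letter n)} {x y : Letter n} (hxy : x ≠ y)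
    (e : push s x = push t y) :
    ∃ w g h l m, s = g :: w ∧ t = h :: w ∧ inP g ∧ inP h ∧ inQ x ∧ inQ y ∧
      push s x = m :: l :: w ∧ inL l m := by
  rcases push_cases s x with ⟨es, -⟩ | ⟨g, w, l, m, rfl, eg, es⟩ <;>
    rcases push_cases t y with ⟨et, -⟩ | ⟨h, w', l', m', rfl, eh, et⟩ <;>
    simp only [es, et, List.cons.injEq] at e
  · exact absurd e.1 hxy
  · obtain ⟨rfl, rfl⟩ := e
    obtain ⟨h1, h2, h3, h4, h5⟩ := toL_spec eh
    exact ⟨w', l', h, l', x, rfl, rfl, h3, h1, h4, h2, es, h5⟩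
  · obtain ⟨rfl, rfl⟩ := e
    obtain ⟨h1, h2, h3, h4, h5⟩ := toL_spec eg
    exact ⟨w, g, l, l, m, rfl, rfl, h1, h3, h2, h4, es, h5⟩
  · obtain ⟨rfl, rfl, rfl⟩ := e
    exact absurd (eq_of_toL_eq_some eg eh) hxy

/-- A final letter of `P_n` can be cancelled. -/
lemma eq_of_nf_mul_gen_eq_cons {n : ℕ} {p : Mn n} {z g : Letter n} {w : List (Letter n)}
    (hg : inP g) (e : nf (p * gen z) = g :: w) : p = word w.reverse := by
  rw [nf_mul_gen] at e
  rcases push_cases (nf p) z with ⟨es, -⟩ | ⟨h, t, l, m, -, eh, es⟩ <;>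
    simp only [es, List.cons.injEq] at e
  · rw [← e.2, word_reverse_nf]
  · exact absurd (e.1 ▸ hg) (not_inP_of_inQ (toL_spec eh).2.2.2.1)

/-- the key lemma (Lemma `star`). -/
theorem Mn_star_lemma (n : ℕ) (hn : 1 ≤ n) (p q : Mn n)
    (hp : p ≠ 1) (hq : q ≠ 1)
    (x y : List (Letter n)) (hx : x ≠ []) (hy : y ≠ [])
    (hlast : x.getLast hx ≠ y.getLast hy)
    (v : Mn n) (hvx : v = p * word x) (hvy : v = q * word y)
    (hstar : ∀ u ∈ rIdeal p ∩ rIdeal q, ∀ z : Letter n, u * gen z ≠ v)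
    (hpq : q ∉ rIdeal p) :
    IsIntersectionBase v ∧ inQ (x.getLast hx) ∧ inQ (y.getLast hy) ∧ x.length = 1 := by
  obtain ⟨x', x₀, rfl⟩ := List.eq_nil_or_concat' x |>.resolve_left hx
  obtain ⟨y', y₀, rfl⟩ := List.eq_nil_or_concat' y |>.resolve_left hy
  simp only [List.getLast_append_singleton] at hlast ⊢
  rw [word_append, word_singleton, ← mul_assoc] at hvx hvy
  have hnx : nf v = push (nf (p * word x')) x₀ := by rw [hvx, nf_mul_gen]
  have hny : nf v = push (nf (q * word y')) y₀ := by rw [hvy, nf_mul_gen]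
  obtain ⟨w, g, h, l, m, eg, eh, hg, hh, hx₀, hy₀, ev, hlm⟩ :=
    exists_of_push_eq_push hlast (hnx.symm.trans hny)
  rw [← hnx] at ev
  refine ⟨⟨w.reverse, l, m, ?_, ?_, hlm⟩, hx₀, hy₀, ?_⟩
  · have := isChain_nf hn v
    rw [ev, ← List.isChain_reverse] at this
    simp only [List.reverse_cons, List.append_assoc, List.cons_append, List.nil_append] at this
    exact this
  · simpa [ev] using word_reverse_nf v
  · rcases List.eq_nil_or_concat' x' with rfl | ⟨x'', z, rfl⟩
    · rfl
    exfalso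
    rw [word_append, word_singleton, ← mul_assoc] at eg
    have hpw := eq_of_nf_mul_gen_eq_cons hg eg
    rcases List.eq_nil_or_concat' y' with rfl | ⟨y'', z', rfl⟩
    · refine hpq ⟨word x'' * gen h, ?_⟩
      rw [← mul_assoc, hpw, ← word_singleton, ← word_append, ← List.reverse_cons, ← eh,
        word_reverse_nf]
      exact (mul_one q).symm
    · rw [word_append, word_singleton, ← mul_assoc] at eh
      have hqw := eq_of_nf_mul_gen_eq_cons hh eh
      refine hstar (p * word (x'' ++ [z])) ⟨⟨_, rfl⟩, word y'' * gen z, ?_⟩ x₀ hvx.symm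
      rw [word_append, word_singleton, ← mul_assoc, ← mul_assoc, hpw, hqw]

end Malcev
end

section
/- In the monoid M_1, the intersection A_1M_1 ∩ dM_1 equals (A_1C_1)M_1 ∪ (A_1D_1)M_1, i.e. the right ideal generated by the two elements A_1C_1 and A_1D_1. -/
namespace Malcev

open FreeMonoid

/-- The information about a word of `X_1*` that is invariant under `ρ_1` on prefixes:
which letter of `Q_1` it starts with, whether it starts with one side of `da = A_1C_1`
(`AC`) or of `A_1D_1 = db` (`AD`), or else whether it starts with `A_1` or `d`. -/
inductive PrefixType : Type
  | a | b | C | D | AC | AD | A | d | other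

/-- The prefix type of `xw`, given the prefix type of `w`. -/
def PrefixType.cons : Letter 1 → PrefixType → PrefixType
  | .a, _ => .a
  | .b, _ => .b
  | .c, _ => .other
  | .B _, _ => .other
  | .C _, _ => .C
  | .D _, _ => .D
  | .A _, .C => .AC
  | .A _, .D => .AD
  | .A _, _ => .A
  | .d, .a => .AC
  | .d, .b => .AD
  | .d, _ => .d

/-- The left action of `X_1*` on prefix types. -/
def wordAction : FreeMonoid (Letter 1) →* Function.End PrefixType :=
  FreeMonoid.lift PrefixType.cons

theorem Mcon_one_le_ker_wordAction : Mcon 1 ≤ Con.ker wordAction := by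
  refine Con.conGen_le.2 fun u v h => ?_
  rw [Con.ker_rel]
  cases h with
  | AD i h => omega
  | BC i h => omega
  | _ => rfl

/-- The left action of `M_1` on prefix types. -/
def action : Mn 1 →* Function.End PrefixType :=
  (Mcon 1).lift wordAction Mcon_one_le_ker_wordAction

theorem action_gen_mul (x : Letter 1) (m : Mn 1) (s : PrefixType) :
    action (gen x * m) s = PrefixType.cons x (action m s) := by
  rw [map_mul]
  rfl

theorem eq_one_or_gen_mul {n : ℕ} (m : Mn n) : m = 1 ∨ ∃ x m', m = gen x * m' := by
  obtain ⟨w, rfl⟩ := Con.mk'_surjective m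
  cases w using FreeMonoid.casesOn with
  | one => exact .inl (map_one _)
  | of_mul x w => exact .inr ⟨x, mk n w, map_mul _ _ _⟩

theorem mem_rIdeal_C_of_action {m : Mn 1} (h : action m .other = .C) :
    m ∈ rIdeal (gen (Letter.C (0 : Fin 1))) := by
  obtain rfl | ⟨x, m, rfl⟩ := eq_one_or_gen_mul m
  · rw [map_one] at h
    cases h
  · rw [action_gen_mul] at h
    generalize action m .other = s at h
    cases x with
    | C i => exact ⟨m, by rw [Subsingleton.elim i 0]⟩
    | _ => cases s <;> cases h

theorem mem_rIdeal_D_of_action {m : Mn 1} (h : action m .other = .D) :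
    m ∈ rIdeal (gen (Letter.D (0 : Fin 1))) := by
  obtain rfl | ⟨x, m, rfl⟩ := eq_one_or_gen_mul m
  · rw [map_one] at h
    cases h
  · rw [action_gen_mul] at h
    generalize action m .other = s at h
    cases x with
    | D i => exact ⟨m, by rw [Subsingleton.elim i 0]⟩
    | _ => cases s <;> cases h

theorem PrefixType.eq_C_or_eq_D_of_cons_eq {i : Fin 1} {s t : PrefixType}
    (h : cons (.A i) s = cons .d t) : s = .C ∨ s = .D := by
  cases s <;> cases t <;> simp_all [cons]

theorem gen_A_mul_gen_C :
    gen (Letter.A (0 : Fin 1)) * gen (Letter.C 0) = gen .d * gen .a :=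
  ((Con.eq _).2 (ConGen.Rel.of _ _ (rel.da Nat.one_pos))).symm

theorem gen_A_mul_gen_D :
    gen (Letter.A (0 : Fin 1)) * gen (Letter.D 0) = gen .d * gen .b :=
  (Con.eq _).2 (ConGen.Rel.of _ _ (rel.An Nat.one_pos))

/-- `A_1M_1 ∩ dM_1 = (A_1C_1)M_1 ∪ (A_1D_1)M_1`. -/
theorem M1_intersection_eq :
    rIdeal (gen (Letter.A (0 : Fin 1))) ∩ rIdeal (gen (Letter.d : Letter 1)) =
      rIdeal (gen (Letter.A (0 : Fin 1)) * gen (Letter.C (0 : Fin 1))) ∪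
      rIdeal (gen (Letter.A (0 : Fin 1)) * gen (Letter.D (0 : Fin 1))) := by
  apply Set.Subset.antisymm
  · rintro x ⟨⟨u, rfl⟩, v, huv⟩
    have h := congrArg (fun m => action m .other) huv
    simp only [action_gen_mul] at h
    obtain h | h := PrefixType.eq_C_or_eq_D_of_cons_eq h
    · obtain ⟨m, rfl⟩ := mem_rIdeal_C_of_action h
      exact .inl ⟨m, (mul_assoc _ _ _).symm⟩
    · obtain ⟨m, rfl⟩ := mem_rIdeal_D_of_action h
      exact .inr ⟨m, (mul_assoc _ _ _).symm⟩
  · rintro x (⟨m, rfl⟩ | ⟨m, rfl⟩)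
    · exact ⟨⟨_, mul_assoc _ _ _⟩, _, by rw [gen_A_mul_gen_C, mul_assoc]⟩
    · exact ⟨⟨_, mul_assoc _ _ _⟩, _, by rw [gen_A_mul_gen_D, mul_assoc]⟩

end Malcev
end

section
/- For every integer n ≥ 1, the monoid M_n is not right rigid: there exist p, q ∈ M_n with pM_n ∩ qM_n ≠ ∅, p ∉ qM_n and q ∉ pM_n (indeed p = A_1 and q = d witness this). -/
namespace Malcev

open FreeMonoid

/-- The letter weighting with weight `x` on `c, d, C_i, D_i` and `y` on `a, b, A_i, B_i`.
Every word occurring in the defining relations has total weight `x + y`. -/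
def weight {n : ℕ} (x y : ℕ) : Letter n → ℕ
  | .c | .d | .C _ | .D _ => x
  | .a | .b | .A _ | .B _ => y

/-- The extension of `weight x y` to a homomorphism from `M_n` to the additive monoid `ℕ`. -/
def weightHom (n x y : ℕ) : Mn n →* Multiplicative ℕ :=
  (Mcon n).lift (FreeMonoid.lift fun l => Multiplicative.ofAdd (weight x y l)) <|
    Con.conGen_le.mpr fun u v h => by
      rw [Con.ker_rel]
      cases h <;> simp [weight, ← ofAdd_add, add_comm]

theorem weightHom_gen {n : ℕ} (x y : ℕ) (l : Letter n) :
    weightHom n x y (gen l) = Multiplicative.ofAdd (weight x y l) :=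
  rfl

theorem weight_le_of_gen_mem_rIdeal {n : ℕ} (x y : ℕ) {l k : Letter n}
    (h : gen l ∈ rIdeal (gen k)) : weight x y k ≤ weight x y l := by
  obtain ⟨m, hm⟩ := h
  have := congrArg (fun z => (weightHom n x y z).toAdd) hm
  simp only [map_mul, weightHom_gen, toAdd_mul, toAdd_ofAdd] at this
  omega

/-- `M_n` is not right rigid, witnessed by `p = A_1` and `q = d`. -/
theorem Mn_not_right_rigid (n : ℕ) (hn : 1 ≤ n) :
    ∃ p q : Mn n, (rIdeal p ∩ rIdeal q).Nonempty ∧ p ∉ rIdeal q ∧ q ∉ rIdeal p ∧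
      p = gen (Letter.A ⟨0, hn⟩) ∧ q = gen (Letter.d : Letter n) := by
  refine ⟨_, _, ⟨gen .d * gen .a, ⟨gen (.C ⟨0, hn⟩), ?_⟩, ⟨gen .a, rfl⟩⟩, ?_, ?_, rfl, rfl⟩
  · exact (Con.eq _).mpr (ConGen.Rel.of _ _ (rel.da hn))
  · intro h
    simpa [weight] using weight_le_of_gen_mem_rIdeal 2 1 h
  · intro h
    simpa [weight] using weight_le_of_gen_mem_rIdeal 1 2 h

end Malcev
end
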